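/- For any EUF formula F, the formula F* obtained by eliminating all applications of function and predicate symbols of nonzero order via the nested-ITE construction is universally valid if and only if F is universally valid. -/

import Mathlib

mutual
inductive EufTerm (Fn Pr : Type) : Type
  | app : Fn → List (EufTerm Fn Pr) → EufTerm Fn Pr
  | ite : EufFormula Fn Pr → EufTerm Fn Pr → EufTerm Fn Pr → EufTerm Fn Pr
inductive EufFormula (Fn Pr : Type) : Type
  | tt : EufFormula Fn Pr
  | ff : EufFormula Fn Pr
  | not : EufFormula Fn Pr → EufFormula Fn Pr
  | and : EufFormula Fn Pr → EufFormula Fn Pr → EufFormula Fn Pr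
  | or : EufFormula Fn Pr → EufFormula Fn Pr → EufFormula Fn Pr
  | eq : EufTerm Fn Pr → EufTerm Fn Pr → EufFormula Fn Pr
  | papp : Pr → List (EufTerm Fn Pr) → EufFormula Fn Pr
end

structure Interp (Fn Pr : Type) (D : Type u) where
  fn : Fn → List D → D
  pr : Pr → List D → Bool

open Classical in
mutual
noncomputable def evalT {Fn Pr : Type} {D : Type} (I : Interp Fn Pr D) : EufTerm Fn Pr → D
  | .app f args => I.fn f (args.attach.map (fun t => evalT I t.1))
  | .ite G T1 T2 => if evalF I G then evalT I T1 else evalT I T2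
termination_by t => sizeOf t
decreasing_by
  all_goals simp_wf
  all_goals try omega
  all_goals (have := List.sizeOf_lt_of_mem t.2; omega)
noncomputable def evalF {Fn Pr : Type} {D : Type} (I : Interp Fn Pr D) : EufFormula Fn Pr → Bool
  | .tt => true
  | .ff => false
  | .not G => !evalF I G
  | .and G1 G2 => evalF I G1 && evalF I G2
  | .or G1 G2 => evalF I G1 || evalF I G2
  | .eq T1 T2 => decide (evalT I T1 = evalT I T2)
  | .papp p args => I.pr p (args.attach.map (fun t => evalT I t.1))
termination_by g => sizeOf g
decreasing_by
  all_goals simp_wf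
  all_goals try omega
  all_goals (have := List.sizeOf_lt_of_mem t.2; omega)
end
def ValidOn {Fn Pr : Type} (F : EufFormula Fn Pr) (D : Type) : Prop :=
  ∀ I : Interp Fn Pr D, evalF I F = true

def UniversallyValid {Fn Pr : Type} (F : EufFormula Fn Pr) : Prop :=
  ∀ D : Type, Nonempty D → ValidOn F D

/-- Expressions: terms or formulas. -/
inductive EufExpr (Fn Pr : Type) : Type
  | t : EufTerm Fn Pr → EufExpr Fn Pr
  | f : EufFormula Fn Pr → EufExpr Fn Pr

/-- Immediate (proper) subexpression relation. -/
inductive ImmSub {Fn Pr : Type} : EufExpr Fn Pr → EufExpr Fn Pr → Prop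
  | appArg {g : Fn} {args : List (EufTerm Fn Pr)} {T : EufTerm Fn Pr} :
      T ∈ args → ImmSub (.t T) (.t (.app g args))
  | iteC {G : EufFormula Fn Pr} {T1 T2 : EufTerm Fn Pr} : ImmSub (.f G) (.t (.ite G T1 T2))
  | ite1 {G : EufFormula Fn Pr} {T1 T2 : EufTerm Fn Pr} : ImmSub (.t T1) (.t (.ite G T1 T2))
  | ite2 {G : EufFormula Fn Pr} {T1 T2 : EufTerm Fn Pr} : ImmSub (.t T2) (.t (.ite G T1 T2))
  | not {G : EufFormula Fn Pr} : ImmSub (.f G) (.f (.not G))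
  | andL {G1 G2 : EufFormula Fn Pr} : ImmSub (.f G1) (.f (.and G1 G2))
  | andR {G1 G2 : EufFormula Fn Pr} : ImmSub (.f G2) (.f (.and G1 G2))
  | orL {G1 G2 : EufFormula Fn Pr} : ImmSub (.f G1) (.f (.or G1 G2))
  | orR {G1 G2 : EufFormula Fn Pr} : ImmSub (.f G2) (.f (.or G1 G2))
  | eqL {T1 T2 : EufTerm Fn Pr} : ImmSub (.t T1) (.f (.eq T1 T2))
  | eqR {T1 T2 : EufTerm Fn Pr} : ImmSub (.t T2) (.f (.eq T1 T2))
  | pappArg {p : Pr} {args : List (EufTerm Fn Pr)} {T : EufTerm Fn Pr} :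
      T ∈ args → ImmSub (.t T) (.f (.papp p args))

/-- `SubExpr a b`: `a` occurs (as a subexpression) in `b`. -/
def SubExpr {Fn Pr : Type} (a b : EufExpr Fn Pr) : Prop := Relation.ReflTransGen ImmSub a b

def TermInT {Fn Pr : Type} (T S : EufTerm Fn Pr) : Prop := SubExpr (.t T) (.t S)
def TermInF {Fn Pr : Type} (T : EufTerm Fn Pr) (F : EufFormula Fn Pr) : Prop :=
  SubExpr (.t T) (.f F)
def FormulaInT {Fn Pr : Type} (G : EufFormula Fn Pr) (S : EufTerm Fn Pr) : Prop :=
  SubExpr (.f G) (.t S)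
def FormulaInF {Fn Pr : Type} (G F : EufFormula Fn Pr) : Prop := SubExpr (.f G) (.f F)

def IsAppTerm {Fn Pr : Type} : EufTerm Fn Pr → Prop
  | .app _ _ => True
  | _ => False

/-- `𝒯(F)`: the function application terms occurring in `F`. -/
def AppTermsF {Fn Pr : Type} (F : EufFormula Fn Pr) : Set (EufTerm Fn Pr) :=
  {T | IsAppTerm T ∧ TermInF T F}

/-- A function symbol occurs in `F` when some application of it occurs in `F`. -/
def FnInF {Fn Pr : Type} (g : Fn) (F : EufFormula Fn Pr) : Prop :=
  ∃ args, TermInF (EufTerm.app g args) F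

def PrInF {Fn Pr : Type} (p : Pr) (F : EufFormula Fn Pr) : Prop :=
  ∃ args, FormulaInF (EufFormula.papp p args) F

/-- `I` is diverse for `F` with respect to the set `Sg` of function symbols. -/
def DiverseFor {Fn Pr D : Type} (I : Interp Fn Pr D) (F : EufFormula Fn Pr)
    (Sg : Set Fn) : Prop :=
  ∀ (g : Fn) (args : List (EufTerm Fn Pr)), g ∈ Sg →
    TermInF (EufTerm.app g args) F →
    ∀ T2 ∈ AppTermsF F, evalT I (EufTerm.app g args) = evalT I T2 →
      ∃ args2, T2 = EufTerm.app g args2 ∧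
        List.Forall₂ (fun a b => evalT I a = evalT I b) args args2

mutual
/-- PEUF g-terms, where `isP` designates the p-function symbols. -/
inductive IsGTerm {Fn Pr : Type} (isP : Fn → Prop) : EufTerm Fn Pr → Prop
  | ite {G : EufFormula Fn Pr} {T1 T2 : EufTerm Fn Pr} :
      IsGFormula isP G → IsGTerm isP T1 → IsGTerm isP T2 → IsGTerm isP (.ite G T1 T2)
  | app {g : Fn} {args : List (EufTerm Fn Pr)} :
      ¬ isP g → (∀ T ∈ args, IsPTerm isP T) → IsGTerm isP (.app g args)
/-- PEUF p-terms. -/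
inductive IsPTerm {Fn Pr : Type} (isP : Fn → Prop) : EufTerm Fn Pr → Prop
  | g {T : EufTerm Fn Pr} : IsGTerm isP T → IsPTerm isP T
  | ite {G : EufFormula Fn Pr} {T1 T2 : EufTerm Fn Pr} :
      IsGFormula isP G → IsPTerm isP T1 → IsPTerm isP T2 → IsPTerm isP (.ite G T1 T2)
  | app {g : Fn} {args : List (EufTerm Fn Pr)} :
      isP g → (∀ T ∈ args, IsPTerm isP T) → IsPTerm isP (.app g args)
/-- PEUF g-formulas. -/
inductive IsGFormula {Fn Pr : Type} (isP : Fn → Prop) : EufFormula Fn Pr → Prop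
  | tt : IsGFormula isP .tt
  | ff : IsGFormula isP .ff
  | not {G : EufFormula Fn Pr} : IsGFormula isP G → IsGFormula isP (.not G)
  | and {G1 G2 : EufFormula Fn Pr} :
      IsGFormula isP G1 → IsGFormula isP G2 → IsGFormula isP (.and G1 G2)
  | or {G1 G2 : EufFormula Fn Pr} :
      IsGFormula isP G1 → IsGFormula isP G2 → IsGFormula isP (.or G1 G2)
  | eq {T1 T2 : EufTerm Fn Pr} :
      IsGTerm isP T1 → IsGTerm isP T2 → IsGFormula isP (.eq T1 T2)
  | papp {p : Pr} {args : List (EufTerm Fn Pr)} :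
      (∀ T ∈ args, IsPTerm isP T) → IsGFormula isP (.papp p args)
/-- PEUF p-formulas. -/
inductive IsPFormula {Fn Pr : Type} (isP : Fn → Prop) : EufFormula Fn Pr → Prop
  | g {G : EufFormula Fn Pr} : IsGFormula isP G → IsPFormula isP G
  | and {G1 G2 : EufFormula Fn Pr} :
      IsPFormula isP G1 → IsPFormula isP G2 → IsPFormula isP (.and G1 G2)
  | or {G1 G2 : EufFormula Fn Pr} :
      IsPFormula isP G1 → IsPFormula isP G2 → IsPFormula isP (.or G1 G2)
  | eq {T1 T2 : EufTerm Fn Pr} :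
      IsPTerm isP T1 → IsPTerm isP T2 → IsPFormula isP (.eq T1 T2)
end

/-- The p-function symbols occurring in `F`. -/
def PSymbolsIn {Fn Pr : Type} (isP : Fn → Prop) (F : EufFormula Fn Pr) : Set Fn :=
  {g | isP g ∧ FnInF g F}

/-- `I` is maximally diverse for the p-formula `F`. -/
def MaxDiverse {Fn Pr D : Type} (isP : Fn → Prop) (I : Interp Fn Pr D)
    (F : EufFormula Fn Pr) : Prop :=
  DiverseFor I F (PSymbolsIn isP F)

/-- `I'` refines `I` on the term set `Ts`. -/
def RefinesOn {Fn Pr D D' : Type} (I' : Interp Fn Pr D') (I : Interp Fn Pr D)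
    (Ts : Set (EufTerm Fn Pr)) : Prop :=
  ∀ T1 ∈ Ts, ∀ T2 ∈ Ts, evalT I' T1 = evalT I' T2 → evalT I T1 = evalT I T2

def ProperRefinesOn {Fn Pr D D' : Type} (I' : Interp Fn Pr D') (I : Interp Fn Pr D)
    (Ts : Set (EufTerm Fn Pr)) : Prop :=
  RefinesOn I' I Ts ∧
    ∃ T1 ∈ Ts, ∃ T2 ∈ Ts, evalT I T1 = evalT I T2 ∧ evalT I' T1 ≠ evalT I' T2
open Classical in
mutual
/-- Substitute the term `B` for each instance of the term `A`. -/
noncomputable def substT {Fn Pr : Type} (A B : EufTerm Fn Pr) : EufTerm Fn Pr → EufTerm Fn Pr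
  | .app g args =>
      if EufTerm.app g args = A then B
      else .app g (args.attach.map (fun t => substT A B t.1))
  | .ite G T1 T2 =>
      if EufTerm.ite G T1 T2 = A then B
      else .ite (substF A B G) (substT A B T1) (substT A B T2)
termination_by t => sizeOf t
decreasing_by
  all_goals simp_wf
  all_goals try omega
  all_goals (have := List.sizeOf_lt_of_mem t.2; omega)
noncomputable def substF {Fn Pr : Type} (A B : EufTerm Fn Pr) : EufFormula Fn Pr → EufFormula Fn Pr
  | .tt => .tt
  | .ff => .ff
  | .not G => .not (substF A B G)
  | .and G1 G2 => .and (substF A B G1) (substF A B G2)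
  | .or G1 G2 => .or (substF A B G1) (substF A B G2)
  | .eq T1 T2 => .eq (substT A B T1) (substT A B T2)
  | .papp p args => .papp p (args.attach.map (fun t => substT A B t.1))
termination_by g => sizeOf g
decreasing_by
  all_goals simp_wf
  all_goals try omega
  all_goals (have := List.sizeOf_lt_of_mem t.2; omega)
end

open Classical in
mutual
/-- Substitute the formula `B` for each instance of the formula `A` inside a term. -/
noncomputable def fsubstT {Fn Pr : Type} (A B : EufFormula Fn Pr) : EufTerm Fn Pr → EufTerm Fn Pr
  | .app g args => .app g (args.attach.map (fun t => fsubstT A B t.1))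
  | .ite G T1 T2 => .ite (fsubstF A B G) (fsubstT A B T1) (fsubstT A B T2)
termination_by t => sizeOf t
decreasing_by
  all_goals simp_wf
  all_goals try omega
  all_goals (have := List.sizeOf_lt_of_mem t.2; omega)
/-- Substitute the formula `B` for each instance of the formula `A`. -/
noncomputable def fsubstF {Fn Pr : Type} (A B : EufFormula Fn Pr) : EufFormula Fn Pr → EufFormula Fn Pr
  | .tt => if EufFormula.tt = A then B else .tt
  | .ff => if EufFormula.ff = A then B else .ff
  | .not G => if EufFormula.not G = A then B else .not (fsubstF A B G)
  | .and G1 G2 => if EufFormula.and G1 G2 = A then B else .and (fsubstF A B G1) (fsubstF A B G2)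
  | .or G1 G2 => if EufFormula.or G1 G2 = A then B else .or (fsubstF A B G1) (fsubstF A B G2)
  | .eq T1 T2 => if EufFormula.eq T1 T2 = A then B else .eq (fsubstT A B T1) (fsubstT A B T2)
  | .papp p args =>
      if EufFormula.papp p args = A then B
      else .papp p (args.attach.map (fun t => fsubstT A B t.1))
termination_by g => sizeOf g
decreasing_by
  all_goals simp_wf
  all_goals try omega
  all_goals (have := List.sizeOf_lt_of_mem t.2; omega)
end
/-- The formula `C_{i,j}`: conjunction of the equations between transformed arguments. -/
def Cform {Fn Pr : Type} (hatS : ℕ → ℕ → EufTerm Fn Pr) (k i j : ℕ) : EufFormula Fn Pr :=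
  ((List.range' 1 k).map (fun l => EufFormula.eq (hatS i l) (hatS j l))).foldr .and .tt

/-- The nested-ITE term `V_{i,j}`. -/
def Vterm {Fn Pr : Type} (vf : ℕ → Fn) (hatS : ℕ → ℕ → EufTerm Fn Pr) (k i : ℕ) :
    ℕ → EufTerm Fn Pr
  | j =>
    if h : j < i then
      .ite (Cform hatS k i j) (.app (vf j) []) (Vterm vf hatS k i (j+1))
    else .app (vf i) []
termination_by j => i - j
decreasing_by omega

/-- The nested-ITE term `U_i` replacing the i-th f-application. -/
def Uterm {Fn Pr : Type} (vf : ℕ → Fn) (hatS : ℕ → ℕ → EufTerm Fn Pr) (k i : ℕ) :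
    EufTerm Fn Pr :=
  Vterm vf hatS k i 1

/-- `stepT … i E = E⁽ⁱ⁾` for terms. -/
noncomputable def stepT {Fn Pr : Type} (Ts : ℕ → EufTerm Fn Pr) (vf : ℕ → Fn)
    (hatS : ℕ → ℕ → EufTerm Fn Pr) (k : ℕ) : ℕ → EufTerm Fn Pr → EufTerm Fn Pr
  | 0, E => E
  | i+1, E =>
      substT (stepT Ts vf hatS k i (Ts (i+1))) (Uterm vf hatS k (i+1)) (stepT Ts vf hatS k i E)

/-- `stepF … i E = E⁽ⁱ⁾` for formulas. -/
noncomputable def stepF {Fn Pr : Type} (Ts : ℕ → EufTerm Fn Pr) (vf : ℕ → Fn)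
    (hatS : ℕ → ℕ → EufTerm Fn Pr) (k : ℕ) : ℕ → EufFormula Fn Pr → EufFormula Fn Pr
  | 0, E => E
  | i+1, E =>
      substF (stepT Ts vf hatS k i (Ts (i+1))) (Uterm vf hatS k (i+1)) (stepF Ts vf hatS k i E)

/-- The f-order of a term: the largest index `i ∈ [1,n]` with `Ts i` occurring in `E`. -/
noncomputable def fordT {Fn Pr : Type} (n : ℕ) (Ts : ℕ → EufTerm Fn Pr)
    (E : EufTerm Fn Pr) : ℕ :=
  sSup {i | 1 ≤ i ∧ i ≤ n ∧ TermInT (Ts i) E}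

/-- The f-order of a formula. -/
noncomputable def fordF {Fn Pr : Type} (n : ℕ) (Ts : ℕ → EufTerm Fn Pr)
    (E : EufFormula Fn Pr) : ℕ :=
  sSup {i | 1 ≤ i ∧ i ≤ n ∧ TermInF (Ts i) E}

/-- `Ê` for terms: `E⁽ᵐ⁾` where `m` is the f-order of `E`. -/
noncomputable def hatT {Fn Pr : Type} (n : ℕ) (Ts : ℕ → EufTerm Fn Pr) (vf : ℕ → Fn)
    (hatS : ℕ → ℕ → EufTerm Fn Pr) (k : ℕ) (E : EufTerm Fn Pr) : EufTerm Fn Pr :=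
  stepT Ts vf hatS k (fordT n Ts E) E

/-- `Ê` for formulas. -/
noncomputable def hatF {Fn Pr : Type} (n : ℕ) (Ts : ℕ → EufTerm Fn Pr) (vf : ℕ → Fn)
    (hatS : ℕ → ℕ → EufTerm Fn Pr) (k : ℕ) (E : EufFormula Fn Pr) : EufFormula Fn Pr :=
  stepF Ts vf hatS k (fordF n Ts E) E

/-- Hypotheses of the nested-ITE elimination of the function symbol `f` from `G`:
`Ts 1, …, Ts n` are the syntactically distinct f-application terms of `G` (ordered so that
subterms precede superterms) with argument terms `S i 1, …, S i k`; the `vf i` are fresh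
domain variables; and `hatS i l` is the transformed argument term `Ŝ_{i,l}`. -/
structure ElimHyps {Fn Pr : Type} (G : EufFormula Fn Pr) (f : Fn) (k n : ℕ)
    (Ts : ℕ → EufTerm Fn Pr) (S : ℕ → ℕ → EufTerm Fn Pr) (vf : ℕ → Fn)
    (hatS : ℕ → ℕ → EufTerm Fn Pr) : Prop where
  k_pos : 1 ≤ k
  ts_app : ∀ i, 1 ≤ i → i ≤ n → Ts i = EufTerm.app f ((List.range' 1 k).map (S i))
  ts_occurs : ∀ i, 1 ≤ i → i ≤ n → TermInF (Ts i) G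
  ts_distinct : ∀ i j, 1 ≤ i → i ≤ n → 1 ≤ j → j ≤ n → Ts i = Ts j → i = j
  ts_complete : ∀ args, TermInF (EufTerm.app f args) G →
      ∃ i, 1 ≤ i ∧ i ≤ n ∧ EufTerm.app f args = Ts i
  ts_order : ∀ i j, 1 ≤ i → i ≤ n → 1 ≤ j → j ≤ n → TermInT (Ts i) (Ts j) → i ≠ j → i < j
  vf_fresh : ∀ i, 1 ≤ i → i ≤ n → ¬ FnInF (vf i) G
  vf_inj : ∀ i j, 1 ≤ i → i ≤ n → 1 ≤ j → j ≤ n → vf i = vf j → i = j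
  vf_ne_f : ∀ i, 1 ≤ i → i ≤ n → vf i ≠ f
  hatS_spec : ∀ j l, 1 ≤ j → j ≤ n → 1 ≤ l → l ≤ k →
      hatS j l = stepT Ts vf hatS k (fordT n Ts (S j l)) (S j l)

/-- `Ĝ = G⁽ⁿ⁾`: the result of eliminating `f` from `G`. -/
noncomputable def elimResult {Fn Pr : Type} (G : EufFormula Fn Pr) (n : ℕ)
    (Ts : ℕ → EufTerm Fn Pr) (vf : ℕ → Fn) (hatS : ℕ → ℕ → EufTerm Fn Pr) (k : ℕ) :
    EufFormula Fn Pr :=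
  stepF Ts vf hatS k n G
/-- The nested-ITE-style formula `Vp_{i,j}` used when eliminating a predicate symbol. -/
def Vform {Fn Pr : Type} (vp : ℕ → Pr) (hatS : ℕ → ℕ → EufTerm Fn Pr) (k i : ℕ) :
    ℕ → EufFormula Fn Pr
  | j =>
    if h : j < i then
      .or (.and (Cform hatS k i j) (.papp (vp j) []))
          (.and (.not (Cform hatS k i j)) (Vform vp hatS k i (j+1)))
    else .papp (vp i) []
termination_by j => i - j
decreasing_by omega

/-- The formula `Up_i` replacing the i-th p-application. -/
def Uform {Fn Pr : Type} (vp : ℕ → Pr) (hatS : ℕ → ℕ → EufTerm Fn Pr) (k i : ℕ) :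
    EufFormula Fn Pr :=
  Vform vp hatS k i 1

mutual
/-- Transformation steps for predicate elimination, on terms. -/
noncomputable def pstepT {Fn Pr : Type} (Ps : ℕ → EufFormula Fn Pr) (vp : ℕ → Pr)
    (hatS : ℕ → ℕ → EufTerm Fn Pr) (k : ℕ) : ℕ → EufTerm Fn Pr → EufTerm Fn Pr
  | 0, E => E
  | i+1, E =>
      fsubstT (pstepF Ps vp hatS k i (Ps (i+1))) (Uform vp hatS k (i+1))
        (pstepT Ps vp hatS k i E)
/-- Transformation steps for predicate elimination, on formulas. -/
noncomputable def pstepF {Fn Pr : Type} (Ps : ℕ → EufFormula Fn Pr) (vp : ℕ → Pr)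
    (hatS : ℕ → ℕ → EufTerm Fn Pr) (k : ℕ) : ℕ → EufFormula Fn Pr → EufFormula Fn Pr
  | 0, E => E
  | i+1, E =>
      fsubstF (pstepF Ps vp hatS k i (Ps (i+1))) (Uform vp hatS k (i+1))
        (pstepF Ps vp hatS k i E)
end

/-- The p-order of a term. -/
noncomputable def pfordT {Fn Pr : Type} (n : ℕ) (Ps : ℕ → EufFormula Fn Pr)
    (E : EufTerm Fn Pr) : ℕ :=
  sSup {i | 1 ≤ i ∧ i ≤ n ∧ FormulaInT (Ps i) E}

/-- The p-order of a formula. -/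
noncomputable def pfordF {Fn Pr : Type} (n : ℕ) (Ps : ℕ → EufFormula Fn Pr)
    (E : EufFormula Fn Pr) : ℕ :=
  sSup {i | 1 ≤ i ∧ i ≤ n ∧ FormulaInF (Ps i) E}

/-- Hypotheses of the analogous elimination of a predicate symbol `p` of nonzero order
from `G`, using fresh propositional variables `vp i`. -/
structure PrElimHyps {Fn Pr : Type} (G : EufFormula Fn Pr) (p : Pr) (k n : ℕ)
    (Ps : ℕ → EufFormula Fn Pr) (S : ℕ → ℕ → EufTerm Fn Pr) (vp : ℕ → Pr)
    (hatS : ℕ → ℕ → EufTerm Fn Pr) : Prop where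
  k_pos : 1 ≤ k
  ps_app : ∀ i, 1 ≤ i → i ≤ n → Ps i = EufFormula.papp p ((List.range' 1 k).map (S i))
  ps_occurs : ∀ i, 1 ≤ i → i ≤ n → FormulaInF (Ps i) G
  ps_distinct : ∀ i j, 1 ≤ i → i ≤ n → 1 ≤ j → j ≤ n → Ps i = Ps j → i = j
  ps_complete : ∀ args, FormulaInF (EufFormula.papp p args) G →
      ∃ i, 1 ≤ i ∧ i ≤ n ∧ EufFormula.papp p args = Ps i
  ps_order : ∀ i j, 1 ≤ i → i ≤ n → 1 ≤ j → j ≤ n → FormulaInF (Ps i) (Ps j) → i ≠ j → i < j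
  vp_fresh : ∀ i, 1 ≤ i → i ≤ n → ¬ PrInF (vp i) G
  vp_inj : ∀ i j, 1 ≤ i → i ≤ n → 1 ≤ j → j ≤ n → vp i = vp j → i = j
  vp_ne_p : ∀ i, 1 ≤ i → i ≤ n → vp i ≠ p
  hatS_spec : ∀ j l, 1 ≤ j → j ≤ n → 1 ≤ l → l ≤ k →
      hatS j l = pstepT Ps vp hatS k (pfordT n Ps (S j l)) (S j l)

/-- One elimination step, tracking the set of fresh domain variables introduced for
p-function symbols (`isP` designates the p-function symbols of the original formula). -/
inductive ElimStep {Fn Pr : Type} (isP : Fn → Prop) :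
    EufFormula Fn Pr × Set Fn → EufFormula Fn Pr × Set Fn → Prop
  | fnP {G : EufFormula Fn Pr} {V : Set Fn} {f : Fn} {k n : ℕ}
      {Ts : ℕ → EufTerm Fn Pr} {S : ℕ → ℕ → EufTerm Fn Pr} {vf : ℕ → Fn}
      {hatS : ℕ → ℕ → EufTerm Fn Pr} :
      ElimHyps G f k n Ts S vf hatS → isP f →
      ElimStep isP (G, V)
        (elimResult G n Ts vf hatS k, V ∪ {g | ∃ i, 1 ≤ i ∧ i ≤ n ∧ g = vf i})
  | fnG {G : EufFormula Fn Pr} {V : Set Fn} {f : Fn} {k n : ℕ}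
      {Ts : ℕ → EufTerm Fn Pr} {S : ℕ → ℕ → EufTerm Fn Pr} {vf : ℕ → Fn}
      {hatS : ℕ → ℕ → EufTerm Fn Pr} :
      ElimHyps G f k n Ts S vf hatS → ¬ isP f →
      ElimStep isP (G, V) (elimResult G n Ts vf hatS k, V)
  | pr {G : EufFormula Fn Pr} {V : Set Fn} {p : Pr} {k n : ℕ}
      {Ps : ℕ → EufFormula Fn Pr} {S : ℕ → ℕ → EufTerm Fn Pr} {vp : ℕ → Pr}
      {hatS : ℕ → ℕ → EufTerm Fn Pr} :
      PrElimHyps G p k n Ps S vp hatS →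
      ElimStep isP (G, V) (pstepF Ps vp hatS k n G, V)

/-- A formula containing only domain variables and propositional variables. -/
def OnlyVarsF {Fn Pr : Type} (F : EufFormula Fn Pr) : Prop :=
  (∀ (g : Fn) (args : List (EufTerm Fn Pr)), TermInF (EufTerm.app g args) F → args = []) ∧
  (∀ (p : Pr) (args : List (EufTerm Fn Pr)), FormulaInF (EufFormula.papp p args) F → args = [])

/-- `F*` is obtained from `F` by repeatedly eliminating all function and predicate symbols
of nonzero order; `V` collects the fresh domain variables introduced for p-function
applications. -/
def ElimTo {Fn Pr : Type} (isP : Fn → Prop) (F Fstar : EufFormula Fn Pr)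
    (V : Set Fn) : Prop :=
  Relation.ReflTransGen (ElimStep isP) (F, ∅) (Fstar, V) ∧ OnlyVarsF Fstar

/-- The domain variables occurring in a formula. -/
def DomVarsF {Fn Pr : Type} (F : EufFormula Fn Pr) : Set Fn :=
  {g | TermInF (EufTerm.app g []) F}

/-- `Σ*_p(F)`: the domain variables of `F` that are p-function symbols, together with the
fresh domain variables introduced while eliminating p-function applications. -/
def SigmaStarP {Fn Pr : Type} (isP : Fn → Prop) (F : EufFormula Fn Pr) (V : Set Fn) :
    Set Fn :=
  {g | isP g ∧ TermInF (EufTerm.app g []) F} ∪ V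

/-- `Σ*_g(F)`: the remaining domain variables of `F*`. -/
def SigmaStarG {Fn Pr : Type} (isP : Fn → Prop) (F Fstar : EufFormula Fn Pr)
    (V : Set Fn) : Set Fn :=
  DomVarsF Fstar \ SigmaStarP isP F V

/-- An interpretation of `F*` is diverse over the variable set `Vp` when it assigns to each
variable of `Vp` a value distinct from the values of all other domain variables of `F*`. -/
def DiverseOver {Fn Pr D : Type} (I : Interp Fn Pr D) (Fstar : EufFormula Fn Pr)
    (Vp : Set Fn) : Prop :=
  ∀ v ∈ Vp, TermInF (EufTerm.app v []) Fstar →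
    ∀ w, TermInF (EufTerm.app w []) Fstar → w ≠ v → I.fn v [] ≠ I.fn w []

section Helpers
variable {Fn Pr : Type}

theorem euf_ind (PT : EufTerm Fn Pr → Prop) (PF : EufFormula Fn Pr → Prop)
    (happ : ∀ g args, (∀ T ∈ args, PT T) → PT (.app g args))
    (hite : ∀ G T1 T2, PF G → PT T1 → PT T2 → PT (.ite G T1 T2))
    (htt : PF .tt) (hff : PF .ff) (hnot : ∀ G, PF G → PF (.not G))
    (hand : ∀ G1 G2, PF G1 → PF G2 → PF (.and G1 G2))
    (hor : ∀ G1 G2, PF G1 → PF G2 → PF (.or G1 G2))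
    (heq : ∀ T1 T2, PT T1 → PT T2 → PF (.eq T1 T2))
    (hpapp : ∀ p args, (∀ T ∈ args, PT T) → PF (.papp p args)) :
    (∀ T, PT T) ∧ (∀ F, PF F) := by
  have key : ∀ N : ℕ, (∀ T : EufTerm Fn Pr, sizeOf T < N → PT T) ∧
      (∀ F : EufFormula Fn Pr, sizeOf F < N → PF F) := by
    intro N
    induction N with
    | zero => exact ⟨fun _ h => by omega, fun _ h => by omega⟩
    | succ N ih =>
      obtain ⟨iT, iF⟩ := ih
      constructor
      · intro T h
        cases T with
        | app g args =>
          apply happ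
          intro T hT
          have := List.sizeOf_lt_of_mem hT
          simp at h
          exact iT _ (by omega)
        | ite G T1 T2 =>
          simp at h
          exact hite _ _ _ (iF _ (by omega)) (iT _ (by omega)) (iT _ (by omega))
      · intro F h
        cases F with
        | tt => exact htt
        | ff => exact hff
        | not G => simp at h; exact hnot _ (iF _ (by omega))
        | and G1 G2 => simp at h; exact hand _ _ (iF _ (by omega)) (iF _ (by omega))
        | or G1 G2 => simp at h; exact hor _ _ (iF _ (by omega)) (iF _ (by omega))
        | eq T1 T2 => simp at h; exact heq _ _ (iT _ (by omega)) (iT _ (by omega))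
        | papp p args =>
          apply hpapp
          intro T hT
          have := List.sizeOf_lt_of_mem hT
          simp at h
          exact iT _ (by omega)
  exact ⟨fun T => (key (sizeOf T + 1)).1 T (by omega), fun F => (key (sizeOf F + 1)).2 F (by omega)⟩

theorem evalT_app {D : Type} (I : Interp Fn Pr D) (g : Fn) (args) :
    evalT I (.app g args) = I.fn g (args.map (evalT I)) := by
  rw [evalT]; simp
theorem evalF_papp {D : Type} (I : Interp Fn Pr D) (g : Pr) (args) :
    evalF I (.papp g args) = I.pr g (args.map (evalT I)) := by
  rw [evalF]; simp
open Classical in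
theorem substT_app (A B : EufTerm Fn Pr) (g : Fn) (args) :
    substT A B (.app g args) = if .app g args = A then B else .app g (args.map (substT A B)) := by
  rw [substT]; simp
theorem substF_papp (A B : EufTerm Fn Pr) (g : Pr) (args) :
    substF A B (.papp g args) = .papp g (args.map (substT A B)) := by
  rw [substF]; simp
theorem fsubstT_app (A B : EufFormula Fn Pr) (g : Fn) (args) :
    fsubstT A B (.app g args) = .app g (args.map (fsubstT A B)) := by
  rw [fsubstT]; simp
open Classical in
theorem fsubstF_papp (A B : EufFormula Fn Pr) (g : Pr) (args) :
    fsubstF A B (.papp g args) =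
      if .papp g args = A then B else .papp g (args.map (fsubstT A B)) := by
  rw [fsubstF]; simp

theorem sx_iff (a b : EufExpr Fn Pr) : SubExpr a b ↔ a = b ∨ ∃ c, ImmSub c b ∧ SubExpr a c := by
  constructor
  · intro h
    rcases Relation.ReflTransGen.cases_tail h with h | ⟨c, h1, h2⟩
    · exact Or.inl h.symm
    · exact Or.inr ⟨c, h2, h1⟩
  · rintro (rfl | ⟨c, h1, h2⟩)
    · exact Relation.ReflTransGen.refl
    · exact Relation.ReflTransGen.tail h2 h1

theorem sx_app (a : EufExpr Fn Pr) (g args) : SubExpr a (.t (.app g args)) ↔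
    a = .t (.app g args) ∨ ∃ T ∈ args, SubExpr a (.t T) := by
  rw [sx_iff]; apply or_congr Iff.rfl; constructor
  · rintro ⟨c, h, h2⟩; cases h with | appArg h => exact ⟨_, h, h2⟩
  · rintro ⟨c, h, h2⟩; exact ⟨_, .appArg h, h2⟩
theorem sx_papp (a : EufExpr Fn Pr) (g args) : SubExpr a (.f (.papp g args)) ↔
    a = .f (.papp g args) ∨ ∃ T ∈ args, SubExpr a (.t T) := by
  rw [sx_iff]; apply or_congr Iff.rfl; constructor
  · rintro ⟨c, h, h2⟩; cases h with | pappArg h => exact ⟨_, h, h2⟩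
  · rintro ⟨c, h, h2⟩; exact ⟨_, .pappArg h, h2⟩
theorem sx_ite (a : EufExpr Fn Pr) (G T1 T2) : SubExpr a (.t (.ite G T1 T2)) ↔
    a = .t (.ite G T1 T2) ∨ SubExpr a (.f G) ∨ SubExpr a (.t T1) ∨ SubExpr a (.t T2) := by
  rw [sx_iff]; apply or_congr Iff.rfl; constructor
  · rintro ⟨c, h, h2⟩; cases h <;> simp [h2]
  · rintro (h | h | h)
    exacts [⟨_, .iteC, h⟩, ⟨_, .ite1, h⟩, ⟨_, .ite2, h⟩]
theorem sx_not (a : EufExpr Fn Pr) (G) : SubExpr a (.f (.not G)) ↔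
    a = .f (.not G) ∨ SubExpr a (.f G) := by
  rw [sx_iff]; apply or_congr Iff.rfl; constructor
  · rintro ⟨c, h, h2⟩; cases h; exact h2
  · intro h; exact ⟨_, .not, h⟩
theorem sx_and (a : EufExpr Fn Pr) (G1 G2) : SubExpr a (.f (.and G1 G2)) ↔
    a = .f (.and G1 G2) ∨ SubExpr a (.f G1) ∨ SubExpr a (.f G2) := by
  rw [sx_iff]; apply or_congr Iff.rfl; constructor
  · rintro ⟨c, h, h2⟩; cases h <;> simp [h2]
  · rintro (h | h)
    exacts [⟨_, .andL, h⟩, ⟨_, .andR, h⟩]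
theorem sx_or (a : EufExpr Fn Pr) (G1 G2) : SubExpr a (.f (.or G1 G2)) ↔
    a = .f (.or G1 G2) ∨ SubExpr a (.f G1) ∨ SubExpr a (.f G2) := by
  rw [sx_iff]; apply or_congr Iff.rfl; constructor
  · rintro ⟨c, h, h2⟩; cases h <;> simp [h2]
  · rintro (h | h)
    exacts [⟨_, .orL, h⟩, ⟨_, .orR, h⟩]
theorem sx_eq (a : EufExpr Fn Pr) (G1 G2) : SubExpr a (.f (.eq G1 G2)) ↔
    a = .f (.eq G1 G2) ∨ SubExpr a (.t G1) ∨ SubExpr a (.t G2) := by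
  rw [sx_iff]; apply or_congr Iff.rfl; constructor
  · rintro ⟨c, h, h2⟩; cases h <;> simp [h2]
  · rintro (h | h)
    exacts [⟨_, .eqL, h⟩, ⟨_, .eqR, h⟩]
theorem sx_tt (a : EufExpr Fn Pr) : SubExpr a (.f .tt) ↔ a = .f .tt := by
  rw [sx_iff]; constructor
  · rintro (h | ⟨c, h, h2⟩)
    · exact h
    · cases h
  · exact Or.inl
theorem sx_ff (a : EufExpr Fn Pr) : SubExpr a (.f .ff) ↔ a = .f .ff := by
  rw [sx_iff]; constructor
  · rintro (h | ⟨c, h, h2⟩)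
    · exact h
    · cases h
  · exact Or.inl

theorem sx_refl (a : EufExpr Fn Pr) : SubExpr a a := Relation.ReflTransGen.refl
theorem sx_trans {a b c : EufExpr Fn Pr} (h : SubExpr a b) (h' : SubExpr b c) : SubExpr a c :=
  Relation.ReflTransGen.trans h h'

noncomputable def esz : EufExpr Fn Pr → ℕ
  | .t T => sizeOf T
  | .f F => sizeOf F

theorem imm_sz {a b : EufExpr Fn Pr} (h : ImmSub a b) : esz a < esz b := by
  cases h <;> simp [esz] <;> try omega
  all_goals (rename_i h; have := List.sizeOf_lt_of_mem h; omega)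
theorem sx_sz {a b : EufExpr Fn Pr} (h : SubExpr a b) : esz a ≤ esz b := by
  induction h with
  | refl => exact le_rfl
  | tail _ h ih => exact ih.trans (imm_sz h).le

def OccAgree {D : Type} (I J : Interp Fn Pr D) (e : EufExpr Fn Pr) : Prop :=
  (∀ g args, SubExpr (.t (.app g args)) e → I.fn g = J.fn g) ∧
  (∀ p args, SubExpr (.f (.papp p args)) e → I.pr p = J.pr p)

theorem OccAgree.mono {D : Type} {I J : Interp Fn Pr D} {e e' : EufExpr Fn Pr}
    (h : OccAgree I J e) (h' : ImmSub e' e) : OccAgree I J e' :=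
  ⟨fun g args hh => h.1 g args (hh.tail h'), fun g args hh => h.2 g args (hh.tail h')⟩

theorem eval_agree {D : Type} (I J : Interp Fn Pr D) :
    (∀ T, OccAgree I J (.t T) → evalT I T = evalT J T) ∧
    (∀ F, OccAgree I J (.f F) → evalF I F = evalF J F) := by
  apply euf_ind
  · intro g args ih h
    rw [evalT_app, evalT_app, h.1 g args (sx_refl _)]
    congr 1
    exact List.map_congr_left fun T hT => ih T hT (h.mono (.appArg hT))
  · intro G T1 T2 h1 h2 h3 h
    rw [evalT, evalT, h1 (h.mono .iteC), h2 (h.mono .ite1), h3 (h.mono .ite2)]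
  · intro _; rw [evalF, evalF]
  · intro _; rw [evalF, evalF]
  · intro G ih h; rw [evalF, evalF, ih (h.mono .not)]
  · intro G1 G2 h1 h2 h; rw [evalF, evalF, h1 (h.mono .andL), h2 (h.mono .andR)]
  · intro G1 G2 h1 h2 h; rw [evalF, evalF, h1 (h.mono .orL), h2 (h.mono .orR)]
  · intro G1 G2 h1 h2 h; rw [evalF, evalF, h1 (h.mono .eqL), h2 (h.mono .eqR)]
  · intro g args ih h
    rw [evalF_papp, evalF_papp, h.2 g args (sx_refl _)]
    congr 1
    exact List.map_congr_left fun T hT => ih T hT (h.mono (.pappArg hT))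

theorem eval_subst {D : Type} (I : Interp Fn Pr D) (A B : EufTerm Fn Pr)
    (hAB : evalT I B = evalT I A) :
    (∀ T, evalT I (substT A B T) = evalT I T) ∧ (∀ F, evalF I (substF A B F) = evalF I F) := by
  apply euf_ind
  · intro g args ih
    rw [substT_app]
    split_ifs with h
    · rw [h, hAB]
    · rw [evalT_app, evalT_app, List.map_map]
      congr 1
      exact List.map_congr_left ih
  · intro G T1 T2 h1 h2 h3
    rw [substT]
    split_ifs with h
    · rw [h, hAB]
    · rw [evalT, evalT, h1, h2, h3]
  · rw [substF]
  · rw [substF]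
  · intro G ih; rw [substF, evalF, evalF, ih]
  · intro G1 G2 h1 h2; rw [substF, evalF, evalF, h1, h2]
  · intro G1 G2 h1 h2; rw [substF, evalF, evalF, h1, h2]
  · intro G1 G2 h1 h2; rw [substF, evalF, evalF, h1, h2]
  · intro g args ih
    rw [substF_papp, evalF_papp, evalF_papp, List.map_map]
    congr 1
    exact List.map_congr_left ih

theorem eval_fsubst {D : Type} (I : Interp Fn Pr D) (A B : EufFormula Fn Pr)
    (hAB : evalF I B = evalF I A) :
    (∀ T, evalT I (fsubstT A B T) = evalT I T) ∧ (∀ F, evalF I (fsubstF A B F) = evalF I F) := by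
  apply euf_ind
  · intro g args ih
    rw [fsubstT_app, evalT_app, evalT_app, List.map_map]
    congr 1
    exact List.map_congr_left ih
  · intro G T1 T2 h1 h2 h3
    rw [fsubstT, evalT, evalT, h1, h2, h3]
  · rw [fsubstF]; split_ifs with h
    · rw [h, hAB]
    · rfl
  · rw [fsubstF]; split_ifs with h
    · rw [h, hAB]
    · rfl
  · intro G ih; rw [fsubstF]; split_ifs with h
    · rw [h, hAB]
    · rw [evalF, evalF, ih]
  · intro G1 G2 h1 h2; rw [fsubstF]; split_ifs with h
    · rw [h, hAB]
    · rw [evalF, evalF, h1, h2]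
  · intro G1 G2 h1 h2; rw [fsubstF]; split_ifs with h
    · rw [h, hAB]
    · rw [evalF, evalF, h1, h2]
  · intro G1 G2 h1 h2; rw [fsubstF]; split_ifs with h
    · rw [h, hAB]
    · rw [evalF, evalF, h1, h2]
  · intro g args ih
    rw [fsubstF_papp]; split_ifs with h
    · rw [h, hAB]
    · rw [evalF_papp, evalF_papp, List.map_map]
      congr 1
      exact List.map_congr_left ih

/-- occurrences of applications of `f` after a term substitution -/
def SOcc (f : Fn) (A B : EufTerm Fn Pr) (e' e : EufExpr Fn Pr) : Prop :=
  ∀ args', SubExpr (.t (.app f args')) e' → SubExpr (.t (.app f args')) (.t B) ∨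
    ∃ args, .app f args' = substT A B (.app f args) ∧ .app f args ≠ A ∧
      SubExpr (.t (.app f args)) e

theorem SOcc.mono {f : Fn} {A B : EufTerm Fn Pr} {e' e e2 : EufExpr Fn Pr}
    (h : SOcc f A B e' e) (h2 : ImmSub e e2) : SOcc f A B e' e2 := by
  intro a ha
  rcases h a ha with h | ⟨args, h3, h4, h5⟩
  · exact Or.inl h
  · exact Or.inr ⟨args, h3, h4, h5.tail h2⟩

theorem occ_subst (f : Fn) (A B : EufTerm Fn Pr) :
    (∀ T, SOcc f A B (.t (substT A B T)) (.t T)) ∧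
    (∀ F, SOcc f A B (.f (substF A B F)) (.f F)) := by
  apply euf_ind
  · intro g args ih a ha
    by_cases h : EufTerm.app g args = A
    · rw [substT_app, if_pos h] at ha; exact Or.inl ha
    · have ha0 := ha
      rw [substT_app, if_neg h, sx_app] at ha
      rcases ha with ha | ⟨T, hT, ha⟩
      · right
        simp only [EufExpr.t.injEq] at ha
        obtain ⟨h1, h2⟩ := EufTerm.app.inj ha
        subst h1
        refine ⟨args, ?_, h, sx_refl _⟩
        rw [substT_app, if_neg h, ha]
      · obtain ⟨T0, hT0, rfl⟩ := List.mem_map.1 hT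
        exact (ih T0 hT0).mono (.appArg hT0) a ha
  · intro G T1 T2 h1 h2 h3 a ha
    rw [substT] at ha
    split_ifs at ha with h
    · exact Or.inl ha
    · rw [sx_ite] at ha
      rcases ha with ha | ha | ha | ha
      · simp at ha
      · exact h1.mono .iteC a ha
      · exact h2.mono .ite1 a ha
      · exact h3.mono .ite2 a ha
  · intro a ha; simp [substF, sx_tt] at ha
  · intro a ha; simp [substF, sx_ff] at ha
  · intro G ih a ha
    rw [substF, sx_not] at ha
    rcases ha with ha | ha
    · simp at ha
    · exact ih.mono .not a ha
  · intro G1 G2 h1 h2 a ha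
    rw [substF, sx_and] at ha
    rcases ha with ha | ha | ha
    · simp at ha
    · exact h1.mono .andL a ha
    · exact h2.mono .andR a ha
  · intro G1 G2 h1 h2 a ha
    rw [substF, sx_or] at ha
    rcases ha with ha | ha | ha
    · simp at ha
    · exact h1.mono .orL a ha
    · exact h2.mono .orR a ha
  · intro G1 G2 h1 h2 a ha
    rw [substF, sx_eq] at ha
    rcases ha with ha | ha | ha
    · simp at ha
    · exact h1.mono .eqL a ha
    · exact h2.mono .eqR a ha
  · intro g args ih a ha
    rw [substF_papp, sx_papp] at ha
    rcases ha with ha | ⟨T, hT, ha⟩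
    · simp at ha
    · obtain ⟨T0, hT0, rfl⟩ := List.mem_map.1 hT
      exact (ih T0 hT0).mono (.pappArg hT0) a ha

/-- occurrences of applications of `p` after a formula substitution -/
def FOcc (p : Pr) (A B : EufFormula Fn Pr) (e' e : EufExpr Fn Pr) : Prop :=
  ∀ args', SubExpr (.f (.papp p args')) e' → SubExpr (.f (.papp p args')) (.f B) ∨
    ∃ args, .papp p args' = fsubstF A B (.papp p args) ∧ .papp p args ≠ A ∧
      SubExpr (.f (.papp p args)) e

theorem FOcc.mono {p : Pr} {A B : EufFormula Fn Pr} {e' e e2 : EufExpr Fn Pr}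
    (h : FOcc p A B e' e) (h2 : ImmSub e e2) : FOcc p A B e' e2 := by
  intro a ha
  rcases h a ha with h | ⟨args, h3, h4, h5⟩
  · exact Or.inl h
  · exact Or.inr ⟨args, h3, h4, h5.tail h2⟩

theorem occ_fsubst (p : Pr) (A B : EufFormula Fn Pr) :
    (∀ T, FOcc p A B (.t (fsubstT A B T)) (.t T)) ∧
    (∀ F, FOcc p A B (.f (fsubstF A B F)) (.f F)) := by
  apply euf_ind
  · intro g args ih a ha
    rw [fsubstT_app, sx_app] at ha
    rcases ha with ha | ⟨T, hT, ha⟩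
    · simp at ha
    · obtain ⟨T0, hT0, rfl⟩ := List.mem_map.1 hT
      exact (ih T0 hT0).mono (.appArg hT0) a ha
  · intro G T1 T2 h1 h2 h3 a ha
    rw [fsubstT, sx_ite] at ha
    rcases ha with ha | ha | ha | ha
    · simp at ha
    · exact h1.mono .iteC a ha
    · exact h2.mono .ite1 a ha
    · exact h3.mono .ite2 a ha
  · intro a ha; rw [fsubstF] at ha; split_ifs at ha with h
    · exact Or.inl ha
    · simp [sx_tt] at ha
  · intro a ha; rw [fsubstF] at ha; split_ifs at ha with h
    · exact Or.inl ha
    · simp [sx_ff] at ha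
  · intro G ih a ha
    rw [fsubstF] at ha; split_ifs at ha with h
    · exact Or.inl ha
    rw [sx_not] at ha
    rcases ha with ha | ha
    · simp at ha
    · exact ih.mono .not a ha
  · intro G1 G2 h1 h2 a ha
    rw [fsubstF] at ha; split_ifs at ha with h
    · exact Or.inl ha
    rw [sx_and] at ha
    rcases ha with ha | ha | ha
    · simp at ha
    · exact h1.mono .andL a ha
    · exact h2.mono .andR a ha
  · intro G1 G2 h1 h2 a ha
    rw [fsubstF] at ha; split_ifs at ha with h
    · exact Or.inl ha
    rw [sx_or] at ha
    rcases ha with ha | ha | ha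
    · simp at ha
    · exact h1.mono .orL a ha
    · exact h2.mono .orR a ha
  · intro G1 G2 h1 h2 a ha
    rw [fsubstF] at ha; split_ifs at ha with h
    · exact Or.inl ha
    rw [sx_eq] at ha
    rcases ha with ha | ha | ha
    · simp at ha
    · exact h1.mono .eqL a ha
    · exact h2.mono .eqR a ha
  · intro g args ih a ha
    by_cases h : EufFormula.papp g args = A
    · rw [fsubstF_papp, if_pos h] at ha; exact Or.inl ha
    · rw [fsubstF_papp, if_neg h, sx_papp] at ha
      rcases ha with ha | ⟨T, hT, ha⟩
      · right
        simp only [EufExpr.f.injEq] at ha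
        obtain ⟨h1, h2⟩ := EufFormula.papp.inj ha
        subst h1
        refine ⟨args, ?_, h, sx_refl _⟩
        rw [fsubstF_papp, if_neg h, ha]
      · obtain ⟨T0, hT0, rfl⟩ := List.mem_map.1 hT
        exact (ih T0 hT0).mono (.pappArg hT0) a ha

noncomputable def keyOf {D : Type} (I : Interp Fn Pr D) (hatS : ℕ → ℕ → EufTerm Fn Pr) (k i : ℕ) : List D :=
  (List.range' 1 k).map (fun l => evalT I (hatS i l))

theorem eval_Cform {D : Type} (I : Interp Fn Pr D) (hatS : ℕ → ℕ → EufTerm Fn Pr) (k i j : ℕ) :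
    evalF I (Cform hatS k i j) = true ↔ keyOf I hatS k i = keyOf I hatS k j := by
  unfold Cform keyOf
  generalize List.range' 1 k = L
  induction L with
  | nil => simp [evalF]
  | cons a L ih => simp [evalF, ih]

theorem eval_Vterm {D : Type} (I : Interp Fn Pr D) (vf : ℕ → Fn)
    (hatS : ℕ → ℕ → EufTerm Fn Pr) (k i : ℕ) : ∀ d j, j + d = i →
    ∃ j', j ≤ j' ∧ j' ≤ i ∧ keyOf I hatS k j' = keyOf I hatS k i ∧
      (∀ j'', j ≤ j'' → j'' < j' → keyOf I hatS k j'' ≠ keyOf I hatS k i) ∧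
      evalT I (Vterm vf hatS k i j) = I.fn (vf j') [] := by
  intro d
  induction d with
  | zero =>
    intro j hj
    refine ⟨j, le_rfl, by omega, by rw [← hj]; rfl, fun _ _ _ => by omega, ?_⟩
    rw [Vterm, dif_neg (by omega), evalT_app, ← hj]; rfl
  | succ d ih =>
    intro j hj
    rw [Vterm, dif_pos (by omega), evalT]
    by_cases h : evalF I (Cform hatS k i j) = true
    · refine ⟨j, le_rfl, by omega, ((eval_Cform ..).1 h).symm, fun _ _ _ => by omega, ?_⟩
      rw [if_pos h, evalT_app]; rfl
    · obtain ⟨j', h1, h2, h3, h4, h5⟩ := ih (j+1) (by omega)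
      refine ⟨j', by omega, h2, h3, ?_, by rw [if_neg h]; exact h5⟩
      intro j'' h6 h7
      rcases eq_or_lt_of_le h6 with h8 | h8
      · subst h8; intro h9; exact h ((eval_Cform ..).2 h9.symm)
      · exact h4 j'' h8 h7

theorem eval_Vform {D : Type} (I : Interp Fn Pr D) (vf : ℕ → Pr)
    (hatS : ℕ → ℕ → EufTerm Fn Pr) (k i : ℕ) : ∀ d j, j + d = i →
    ∃ j', j ≤ j' ∧ j' ≤ i ∧ keyOf I hatS k j' = keyOf I hatS k i ∧
      (∀ j'', j ≤ j'' → j'' < j' → keyOf I hatS k j'' ≠ keyOf I hatS k i) ∧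
      evalF I (Vform vf hatS k i j) = I.pr (vf j') [] := by
  intro d
  induction d with
  | zero =>
    intro j hj
    refine ⟨j, le_rfl, by omega, by rw [← hj]; rfl, fun _ _ _ => by omega, ?_⟩
    rw [Vform, dif_neg (by omega), evalF_papp, ← hj]; rfl
  | succ d ih =>
    intro j hj
    rw [Vform, dif_pos (by omega)]
    by_cases h : evalF I (Cform hatS k i j) = true
    · refine ⟨j, le_rfl, by omega, ((eval_Cform ..).1 h).symm, fun _ _ _ => by omega, ?_⟩
      simp [evalF, h]
    · obtain ⟨j', h1, h2, h3, h4, h5⟩ := ih (j+1) (by omega)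
      refine ⟨j', by omega, h2, h3, ?_, by simp [evalF, h, h5]⟩
      intro j'' h6 h7
      rcases eq_or_lt_of_le h6 with h8 | h8
      · subst h8; intro h9; exact h ((eval_Cform ..).2 h9.symm)
      · exact h4 j'' h8 h7

theorem occ_Cform {hatS : ℕ → ℕ → EufTerm Fn Pr} {k i j : ℕ} {a : EufExpr Fn Pr}
    (ha : (∃ g args, a = .t (.app g args)) ∨ ∃ g args, a = .f (.papp g args))
    (h : SubExpr a (.f (Cform hatS k i j))) :
    ∃ l, 1 ≤ l ∧ l ≤ k ∧ (SubExpr a (.t (hatS i l)) ∨ SubExpr a (.t (hatS j l))) := by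
  have key : ∃ l ∈ List.range' 1 k, (SubExpr a (.t (hatS i l)) ∨ SubExpr a (.t (hatS j l))) := by
    unfold Cform at h
    generalize List.range' 1 k = L at h ⊢
    induction L with
    | nil => 
      simp only [List.map_nil, List.foldr_nil, sx_tt] at h
      rcases ha with ⟨_, _, rfl⟩ | ⟨_, _, rfl⟩ <;> simp at h
    | cons b L ih =>
      simp only [List.map_cons, List.foldr_cons, sx_and, sx_eq] at h
      rcases h with h | (h | h | h) | h
      · rcases ha with ⟨_, _, rfl⟩ | ⟨_, _, rfl⟩ <;> simp at h
      · rcases ha with ⟨_, _, rfl⟩ | ⟨_, _, rfl⟩ <;> simp at h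
      · exact ⟨b, by simp, Or.inl h⟩
      · exact ⟨b, by simp, Or.inr h⟩
      · obtain ⟨l, h1, h2⟩ := ih h
        exact ⟨l, by simp [h1], h2⟩
  obtain ⟨l, h1, h2⟩ := key
  rw [List.mem_range'_1] at h1
  exact ⟨l, h1.1, by omega, h2⟩

theorem occ_Vterm {vf : ℕ → Fn} {hatS : ℕ → ℕ → EufTerm Fn Pr} {k i : ℕ} {f : Fn} {args}
    : ∀ d j, j + d = i → 1 ≤ j → SubExpr (.t (.app f args)) (.t (Vterm vf hatS k i j)) →
    (∃ j', 1 ≤ j' ∧ j' ≤ i ∧ vf j' = f) ∨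
    ∃ j' l, 1 ≤ j' ∧ j' ≤ i ∧ 1 ≤ l ∧ l ≤ k ∧ SubExpr (.t (.app f args)) (.t (hatS j' l)) := by
  intro d
  induction d with
  | zero =>
    intro j hj h1 h
    rw [Vterm, dif_neg (by omega), sx_app] at h
    simp at h
    exact Or.inl ⟨i, by omega, le_rfl, h.1.symm⟩
  | succ d ih =>
    intro j hj h1 h
    rw [Vterm, dif_pos (by omega), sx_ite] at h
    rcases h with h | h | h | h
    · simp at h
    · obtain ⟨l, h2, h3, h4 | h4⟩ := occ_Cform (Or.inl ⟨_, _, rfl⟩) h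
      · exact Or.inr ⟨i, l, by omega, le_rfl, h2, h3, h4⟩
      · exact Or.inr ⟨j, l, by omega, by omega, h2, h3, h4⟩
    · rw [sx_app] at h
      simp at h
      exact Or.inl ⟨j, by omega, by omega, h.1.symm⟩
    · exact ih (j+1) (by omega) (by omega) h

theorem occ_Vform {vf : ℕ → Pr} {hatS : ℕ → ℕ → EufTerm Fn Pr} {k i : ℕ} {f : Pr} {args}
    : ∀ d j, j + d = i → 1 ≤ j → SubExpr (.f (.papp f args)) (.f (Vform vf hatS k i j)) →
    (∃ j', 1 ≤ j' ∧ j' ≤ i ∧ vf j' = f) ∨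
    ∃ j' l, 1 ≤ j' ∧ j' ≤ i ∧ 1 ≤ l ∧ l ≤ k ∧ SubExpr (.f (.papp f args)) (.t (hatS j' l)) := by
  intro d
  induction d with
  | zero =>
    intro j hj h1 h
    rw [Vform, dif_neg (by omega), sx_papp] at h
    simp at h
    exact Or.inl ⟨i, by omega, le_rfl, h.1.symm⟩
  | succ d ih =>
    intro j hj h1 h
    have hC : SubExpr (.f (.papp f args)) (.f (Cform hatS k i j)) →
      ∃ j' l, 1 ≤ j' ∧ j' ≤ i ∧ 1 ≤ l ∧ l ≤ k ∧
        SubExpr (.f (.papp f args)) (.t (hatS j' l)) := by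
      intro h
      obtain ⟨l, h2, h3, h4 | h4⟩ := occ_Cform (Or.inr ⟨_, _, rfl⟩) h
      · exact ⟨i, l, by omega, le_rfl, h2, h3, h4⟩
      · exact ⟨j, l, by omega, by omega, h2, h3, h4⟩
    rw [Vform, dif_pos (by omega), sx_or, sx_and, sx_and, sx_not] at h
    rcases h with h | (h | h | h) | (h | (h | h) | h)
    · simp at h
    · simp at h
    · exact Or.inr (hC h)
    · rw [sx_papp] at h
      simp at h
      exact Or.inl ⟨j, by omega, by omega, h.1.symm⟩
    · simp at h
    · simp at h
    · exact Or.inr (hC h)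
    · exact ih (j+1) (by omega) (by omega) h

section fnElim
variable {G : EufFormula Fn Pr} {f : Fn} {k n : ℕ}
    {Ts : ℕ → EufTerm Fn Pr} {S : ℕ → ℕ → EufTerm Fn Pr} {vf : ℕ → Fn}
    {hatS : ℕ → ℕ → EufTerm Fn Pr}

theorem ford_spec (n : ℕ) (Ts : ℕ → EufTerm Fn Pr) (E : EufTerm Fn Pr) :
    (∀ i, 1 ≤ i → i ≤ n → TermInT (Ts i) E → i ≤ fordT n Ts E) ∧
    (fordT n Ts E = 0 ∨ (1 ≤ fordT n Ts E ∧ fordT n Ts E ≤ n ∧ TermInT (Ts (fordT n Ts E)) E)) := by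
  have hb : BddAbove {i | 1 ≤ i ∧ i ≤ n ∧ TermInT (Ts i) E} := ⟨n, fun i hi => hi.2.1⟩
  refine ⟨fun i h1 h2 h3 => le_csSup hb ⟨h1, h2, h3⟩, ?_⟩
  rcases Set.eq_empty_or_nonempty {i | 1 ≤ i ∧ i ≤ n ∧ TermInT (Ts i) E} with h | h
  · left; unfold fordT; rw [h]; simp
  · right; exact Nat.sSup_mem h hb

theorem fn_S_imm (H : ElimHyps G f k n Ts S vf hatS) {j l : ℕ} (h1 : 1 ≤ j) (h2 : j ≤ n)
    (h3 : 1 ≤ l) (h4 : l ≤ k) : ImmSub (.t (S j l)) (.t (Ts j)) := by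
  rw [H.ts_app j h1 h2]
  apply ImmSub.appArg
  apply List.mem_map_of_mem
  rw [List.mem_range'_1]; omega

theorem fn_ford_lt (H : ElimHyps G f k n Ts S vf hatS) {j l : ℕ} (h1 : 1 ≤ j) (h2 : j ≤ n)
    (h3 : 1 ≤ l) (h4 : l ≤ k) : fordT n Ts (S j l) < j := by
  rcases (ford_spec n Ts (S j l)).2 with h | ⟨h5, h6, h7⟩
  · omega
  · have hi := fn_S_imm H h1 h2 h3 h4
    refine H.ts_order _ j h5 h6 h1 h2 (h7.tail hi) ?_
    intro he
    rw [he] at h7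
    have := imm_sz hi
    have := sx_sz h7
    omega

theorem fn_core (H : ElimHyps G f k n Ts S vf hatS) {D : Type} (J : Interp Fn Pr D)
    (hU : ∀ i, 1 ≤ i → i ≤ n →
      (∀ j l, 1 ≤ j → j ≤ i → 1 ≤ l → l ≤ k → evalT J (hatS j l) = evalT J (S j l)) →
      evalT J (Uterm vf hatS k i) = evalT J (Ts i)) :
    ∀ i, i ≤ n → (∀ E, evalT J (stepT Ts vf hatS k i E) = evalT J E) ∧
      (∀ E, evalF J (stepF Ts vf hatS k i E) = evalF J E) := by
  intro i
  induction i using Nat.strong_induction_on with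
  | _ i ih =>
    intro hi
    cases i with
    | zero => exact ⟨fun E => by rw [stepT], fun E => by rw [stepF]⟩
    | succ i =>
      have hA : evalT J (Uterm vf hatS k (i+1)) =
          evalT J (stepT Ts vf hatS k i (Ts (i+1))) := by
        rw [(ih i (by omega) (by omega)).1]
        apply hU _ (by omega) hi
        intro j l h1 h2 h3 h4
        rw [H.hatS_spec j l h1 (by omega) h3 h4]
        have := fn_ford_lt H h1 (by omega) h3 h4
        exact (ih _ (by omega) (by omega)).1 _
      have hs := eval_subst J _ _ hA
      constructor
      · intro E; rw [stepT, hs.1, (ih i (by omega) (by omega)).1]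
      · intro E; rw [stepF, hs.2, (ih i (by omega) (by omega)).2]

theorem fn_occ (f : Fn) (m M : ℕ)
    (hU : ∀ i, 1 ≤ i → i ≤ m → ∀ args, ¬ SubExpr (.t (.app f args)) (.t (Uterm vf hatS k i))) :
    ∀ i, i ≤ m →
      (∀ E, (∀ args, SubExpr (.t (.app f args)) (.t E) → ∃ j, 1 ≤ j ∧ j ≤ M ∧ .app f args = Ts j) →
        ∀ args, SubExpr (.t (.app f args)) (.t (stepT Ts vf hatS k i E)) →
          ∃ j, i < j ∧ j ≤ M ∧ .app f args = stepT Ts vf hatS k i (Ts j)) ∧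
      (∀ E, (∀ args, SubExpr (.t (.app f args)) (.f E) → ∃ j, 1 ≤ j ∧ j ≤ M ∧ .app f args = Ts j) →
        ∀ args, SubExpr (.t (.app f args)) (.f (stepF Ts vf hatS k i E)) →
          ∃ j, i < j ∧ j ≤ M ∧ .app f args = stepT Ts vf hatS k i (Ts j)) := by
  intro i
  induction i with
  | zero =>
    intro _
    refine ⟨?_, ?_⟩
    · intro E hE args h
      rw [stepT] at h
      obtain ⟨j, h1, h2, h3⟩ := hE args h
      exact ⟨j, h1, h2, by rw [stepT, h3]⟩
    · intro E hE args h
      rw [stepF] at h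
      obtain ⟨j, h1, h2, h3⟩ := hE args h
      exact ⟨j, h1, h2, by rw [stepT, h3]⟩
  | succ i ih =>
    intro hi
    have key : ∀ args0, (∃ j, i < j ∧ j ≤ M ∧ .app f args0 = stepT Ts vf hatS k i (Ts j)) →
        .app f args0 ≠ stepT Ts vf hatS k i (Ts (i+1)) →
        ∃ j, i + 1 < j ∧ j ≤ M ∧ 
          substT (stepT Ts vf hatS k i (Ts (i+1))) (Uterm vf hatS k (i+1)) (.app f args0)
            = stepT Ts vf hatS k (i+1) (Ts j) := by
      rintro args0 ⟨j, h1, h2, h3⟩ hne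
      refine ⟨j, ?_, h2, by rw [stepT, h3]⟩
      rcases eq_or_lt_of_le (Nat.succ_le_of_lt h1) with h | h
      · exact absurd (by rw [h3, ← h]) hne
      · exact h
    obtain ⟨ih1, ih2⟩ := ih (by omega)
    refine ⟨?_, ?_⟩
    · intro E hE args h
      rw [stepT] at h
      rcases (occ_subst f _ _).1 _ args h with h | ⟨args0, h1, h2, h3⟩
      · exact absurd h (hU _ (by omega) hi args)
      · rw [h1]; exact key _ (ih1 E hE args0 h3) h2
    · intro E hE args h
      rw [stepF] at h
      rcases (occ_subst f _ _).2 _ args h with h | ⟨args0, h1, h2, h3⟩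
      · exact absurd h (hU _ (by omega) hi args)
      · rw [h1]; exact key _ (ih2 E hE args0 h3) h2

theorem fn_U_free (H : ElimHyps G f k n Ts S vf hatS) :
    ∀ i, (1 ≤ i → i ≤ n → ∀ args, ¬ SubExpr (.t (.app f args)) (.t (Uterm vf hatS k i))) ∧
      (∀ l, 1 ≤ i → i ≤ n → 1 ≤ l → l ≤ k → ∀ args,
        ¬ SubExpr (.t (.app f args)) (.t (hatS i l))) := by
  intro i
  induction i using Nat.strong_induction_on with
  | _ i ih =>
    have hS : ∀ l, 1 ≤ i → i ≤ n → 1 ≤ l → l ≤ k → ∀ args,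
        ¬ SubExpr (.t (.app f args)) (.t (hatS i l)) := by
      intro l h1 h2 h3 h4 args h
      rw [H.hatS_spec i l h1 h2 h3 h4] at h
      have hlt := fn_ford_lt H h1 h2 h3 h4
      obtain ⟨j, h5, h6, -⟩ := (fn_occ (Ts := Ts) (vf := vf) (hatS := hatS) (k := k) f
        (fordT n Ts (S i l)) (fordT n Ts (S i l))
        (fun i' h5 h6 => (ih i' (by omega)).1 h5 (by omega)) _ le_rfl).1 (S i l) (by
          intro args ha
          have hG : TermInF (.app f args) G :=
            sx_trans (ha.tail (fn_S_imm H h1 h2 h3 h4)) (H.ts_occurs i h1 h2)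
          obtain ⟨j, h5, h6, h7⟩ := H.ts_complete args hG
          exact ⟨j, h5, (ford_spec n Ts (S i l)).1 j h5 h6 (by rw [← h7]; exact ha), h7⟩) args h
      omega
    refine ⟨?_, hS⟩
    intro h1 h2 args h
    rcases occ_Vterm (i - 1) 1 (by omega) le_rfl h with ⟨j, h3, h4, h5⟩ | ⟨j, l, h3, h4, h5, h6, h7⟩
    · exact H.vf_ne_f j h3 (by omega) h5
    · rcases eq_or_lt_of_le h4 with h8 | h8
      · subst h8; exact hS l h1 h2 h5 h6 args h7
      · exact (ih j h8).2 l h3 (by omega) h5 h6 args h7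

theorem fn_res_free (H : ElimHyps G f k n Ts S vf hatS) (args) :
    ¬ SubExpr (.t (.app f args)) (.f (elimResult G n Ts vf hatS k)) := by
  intro h
  obtain ⟨j, h1, h2, -⟩ := (fn_occ (Ts := Ts) (vf := vf) (hatS := hatS) (k := k) f n n
    (fun i h5 h6 => (fn_U_free H i).1 h5 h6) n le_rfl).2 G (fun args ha => H.ts_complete args ha)
    args h
  omega

theorem fn_eval_Ts (H : ElimHyps G f k n Ts S vf hatS) {D : Type} (J : Interp Fn Pr D) {i : ℕ}
    (h1 : 1 ≤ i) (h2 : i ≤ n) : evalT J (Ts i) = J.fn f (keyOf J S k i) := by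
  rw [H.ts_app i h1 h2, evalT_app, List.map_map]; rfl

theorem keyOf_congr {D : Type} {I J : Interp Fn Pr D} {A B : ℕ → ℕ → EufTerm Fn Pr} {k i : ℕ}
    (h : ∀ l, 1 ≤ l → l ≤ k → evalT I (A i l) = evalT J (B i l)) :
    keyOf I A k i = keyOf J B k i := by
  apply List.map_congr_left
  intro l hl
  rw [List.mem_range'_1] at hl
  exact h l hl.1 (by omega)

open Classical in
theorem fn_valid (H : ElimHyps G f k n Ts S vf hatS) (D : Type) :
    ValidOn (elimResult G n Ts vf hatS k) D ↔ ValidOn G D := by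
  constructor
  · intro hv I
    let J : Interp Fn Pr D :=
      ⟨fun g xs => if h : ∃ i, 1 ≤ i ∧ i ≤ n ∧ vf i = g then evalT I (Ts h.choose) else I.fn g xs,
        I.pr⟩
    have hJv : ∀ i, 1 ≤ i → i ≤ n → J.fn (vf i) [] = evalT I (Ts i) := by
      intro i h1 h2
      have h : ∃ i', 1 ≤ i' ∧ i' ≤ n ∧ vf i' = vf i := ⟨i, h1, h2, rfl⟩
      have : J.fn (vf i) [] = evalT I (Ts h.choose) := dif_pos h
      rw [this, H.vf_inj _ i h.choose_spec.1 h.choose_spec.2.1 h1 h2 h.choose_spec.2.2]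
    have hag : OccAgree I J (.f G) := by
      refine ⟨?_, fun _ _ _ => rfl⟩
      intro g args hg
      funext xs
      have h : ¬ ∃ i, 1 ≤ i ∧ i ≤ n ∧ vf i = g := by
        rintro ⟨i, h1, h2, rfl⟩
        exact H.vf_fresh i h1 h2 ⟨args, hg⟩
      have e : J.fn g xs = I.fn g xs := dif_neg h
      exact e.symm
    have hagT : ∀ E, SubExpr (.t E) (.f G) → evalT I E = evalT J E := by
      intro E hE
      apply (eval_agree I J).1
      exact ⟨fun g a h => hag.1 g a (sx_trans h hE), fun g a h => hag.2 g a (sx_trans h hE)⟩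
    have hc := (fn_core H J (by
      intro i h1 h2 hS
      obtain ⟨j, h3, h4, h5, -, h6⟩ := eval_Vterm J vf hatS k i (i-1) 1 (by omega)
      have hkey : ∀ j, 1 ≤ j → j ≤ i → keyOf J hatS k j = keyOf J S k j :=
        fun j h1 h2 => keyOf_congr fun l h3 h4 => hS j l h1 h2 h3 h4
      rw [Uterm, h6, hJv j h3 (by omega), hagT _ (H.ts_occurs j h3 (by omega)),
        fn_eval_Ts H J h3 (by omega), fn_eval_Ts H J h1 h2, ← hkey j h3 h4, ← hkey i h1 le_rfl, h5])
      n le_rfl).2 G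
    rw [(eval_agree I J).2 G hag, ← hc]
    exact hv J
  · intro hv J
    let I : Interp Fn Pr D :=
      ⟨fun g xs => if g = f then
          (if h : ∃ j, 1 ≤ j ∧ j ≤ n ∧ keyOf J hatS k j = xs then J.fn (vf (Nat.find h)) []
            else J.fn f xs)
        else J.fn g xs, J.pr⟩
    have hne : ∀ g, g ≠ f → I.fn g = J.fn g := by
      intro g hg; funext xs; exact if_neg hg
    have hf : ∀ xs j, 1 ≤ j → j ≤ n → keyOf J hatS k j = xs →
        (∀ j', 1 ≤ j' → j' < j → keyOf J hatS k j' ≠ xs) → I.fn f xs = J.fn (vf j) [] := by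
      intro xs j h1 h2 h3 h4
      have h : ∃ j, 1 ≤ j ∧ j ≤ n ∧ keyOf J hatS k j = xs := ⟨j, h1, h2, h3⟩
      have e : I.fn f xs = J.fn (vf (Nat.find h)) [] := (if_pos rfl).trans (dif_pos h)
      have : Nat.find h = j := by
        apply le_antisymm (Nat.find_min' h ⟨h1, h2, h3⟩)
        by_contra hc
        exact h4 _ (Nat.find_spec h).1 (by omega) (Nat.find_spec h).2.2
      rw [e, this]
    have hfree : ∀ e : EufExpr Fn Pr, (∀ args, ¬ SubExpr (.t (.app f args)) e) → OccAgree I J e := by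
      intro e he
      refine ⟨?_, fun _ _ _ => rfl⟩
      intro g args hg
      apply hne
      rintro rfl
      exact he _ hg
    have hhat : ∀ j, 1 ≤ j → j ≤ n → keyOf I hatS k j = keyOf J hatS k j := by
      intro j h1 h2
      apply keyOf_congr
      intro l h3 h4
      exact (eval_agree I J).1 _ (hfree _ ((fn_U_free H j).2 l h1 h2 h3 h4))
    have hc := (fn_core H I (by
      intro i h1 h2 hS
      obtain ⟨j, h3, h4, h5, h6, h7⟩ := eval_Vterm I vf hatS k i (i-1) 1 (by omega)
      have hkey : ∀ j, 1 ≤ j → j ≤ i → keyOf I hatS k j = keyOf I S k j :=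
        fun j h1 h2 => keyOf_congr fun l h3 h4 => hS j l h1 h2 h3 h4
      rw [Uterm, h7, fn_eval_Ts H I h1 h2, ← hkey i h1 le_rfl, hne _ (H.vf_ne_f j h3 (by omega))]
      symm
      apply hf _ j h3 (by omega)
      · rw [← hhat j h3 (by omega), h5]
      · intro j' h8 h9
        rw [← hhat j' h8 (by omega)]
        exact h6 j' h8 h9)
      n le_rfl).2 G
    rw [← (eval_agree I J).2 _ (hfree _ (fn_res_free H))]
    exact hc.trans (hv I)
end fnElim

section prElim
variable {G : EufFormula Fn Pr} {f : Pr} {k n : ℕ}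
    {Ts : ℕ → EufFormula Fn Pr} {S : ℕ → ℕ → EufTerm Fn Pr} {vf : ℕ → Pr}
    {hatS : ℕ → ℕ → EufTerm Fn Pr}

theorem pford_spec (n : ℕ) (Ts : ℕ → EufFormula Fn Pr) (E : EufTerm Fn Pr) :
    (∀ i, 1 ≤ i → i ≤ n → FormulaInT (Ts i) E → i ≤ pfordT n Ts E) ∧
    (pfordT n Ts E = 0 ∨ (1 ≤ pfordT n Ts E ∧ pfordT n Ts E ≤ n ∧ FormulaInT (Ts (pfordT n Ts E)) E)) := by
  have hb : BddAbove {i | 1 ≤ i ∧ i ≤ n ∧ FormulaInT (Ts i) E} := ⟨n, fun i hi => hi.2.1⟩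
  refine ⟨fun i h1 h2 h3 => le_csSup hb ⟨h1, h2, h3⟩, ?_⟩
  rcases Set.eq_empty_or_nonempty {i | 1 ≤ i ∧ i ≤ n ∧ FormulaInT (Ts i) E} with h | h
  · left; unfold pfordT; rw [h]; simp
  · right; exact Nat.sSup_mem h hb

theorem pr_S_imm (H : PrElimHyps G f k n Ts S vf hatS) {j l : ℕ} (h1 : 1 ≤ j) (h2 : j ≤ n)
    (h3 : 1 ≤ l) (h4 : l ≤ k) : ImmSub (.t (S j l)) (.f (Ts j)) := by
  rw [H.ps_app j h1 h2]
  apply ImmSub.pappArg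
  apply List.mem_map_of_mem
  rw [List.mem_range'_1]; omega

theorem pr_ford_lt (H : PrElimHyps G f k n Ts S vf hatS) {j l : ℕ} (h1 : 1 ≤ j) (h2 : j ≤ n)
    (h3 : 1 ≤ l) (h4 : l ≤ k) : pfordT n Ts (S j l) < j := by
  rcases (pford_spec n Ts (S j l)).2 with h | ⟨h5, h6, h7⟩
  · omega
  · have hi := pr_S_imm H h1 h2 h3 h4
    refine H.ps_order _ j h5 h6 h1 h2 (h7.tail hi) ?_
    intro he
    rw [he] at h7
    have := imm_sz hi
    have := sx_sz h7
    omega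

theorem pr_core (H : PrElimHyps G f k n Ts S vf hatS) {D : Type} (J : Interp Fn Pr D)
    (hU : ∀ i, 1 ≤ i → i ≤ n →
      (∀ j l, 1 ≤ j → j ≤ i → 1 ≤ l → l ≤ k → evalT J (hatS j l) = evalT J (S j l)) →
      evalF J (Uform vf hatS k i) = evalF J (Ts i)) :
    ∀ i, i ≤ n → (∀ E, evalT J (pstepT Ts vf hatS k i E) = evalT J E) ∧
      (∀ E, evalF J (pstepF Ts vf hatS k i E) = evalF J E) := by
  intro i
  induction i using Nat.strong_induction_on with
  | _ i ih =>
    intro hi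
    cases i with
    | zero => exact ⟨fun E => by rw [pstepT], fun E => by rw [pstepF]⟩
    | succ i =>
      have hA : evalF J (Uform vf hatS k (i+1)) =
          evalF J (pstepF Ts vf hatS k i (Ts (i+1))) := by
        rw [(ih i (by omega) (by omega)).2]
        apply hU _ (by omega) hi
        intro j l h1 h2 h3 h4
        rw [H.hatS_spec j l h1 (by omega) h3 h4]
        have := pr_ford_lt H h1 (by omega) h3 h4
        exact (ih _ (by omega) (by omega)).1 _
      have hs := eval_fsubst J _ _ hA
      constructor
      · intro E; rw [pstepT, hs.1, (ih i (by omega) (by omega)).1]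
      · intro E; rw [pstepF, hs.2, (ih i (by omega) (by omega)).2]

theorem pr_occ (f : Pr) (m M : ℕ)
    (hU : ∀ i, 1 ≤ i → i ≤ m → ∀ args, ¬ SubExpr (.f (.papp f args)) (.f (Uform vf hatS k i))) :
    ∀ i, i ≤ m →
      (∀ E, (∀ args, SubExpr (.f (.papp f args)) (.t E) → ∃ j, 1 ≤ j ∧ j ≤ M ∧ .papp f args = Ts j) →
        ∀ args, SubExpr (.f (.papp f args)) (.t (pstepT Ts vf hatS k i E)) →
          ∃ j, i < j ∧ j ≤ M ∧ .papp f args = pstepF Ts vf hatS k i (Ts j)) ∧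
      (∀ E, (∀ args, SubExpr (.f (.papp f args)) (.f E) → ∃ j, 1 ≤ j ∧ j ≤ M ∧ .papp f args = Ts j) →
        ∀ args, SubExpr (.f (.papp f args)) (.f (pstepF Ts vf hatS k i E)) →
          ∃ j, i < j ∧ j ≤ M ∧ .papp f args = pstepF Ts vf hatS k i (Ts j)) := by
  intro i
  induction i with
  | zero =>
    intro _
    refine ⟨?_, ?_⟩
    · intro E hE args h
      rw [pstepT] at h
      obtain ⟨j, h1, h2, h3⟩ := hE args h
      exact ⟨j, h1, h2, by rw [pstepF, h3]⟩
    · intro E hE args h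
      rw [pstepF] at h
      obtain ⟨j, h1, h2, h3⟩ := hE args h
      exact ⟨j, h1, h2, by rw [pstepF, h3]⟩
  | succ i ih =>
    intro hi
    have key : ∀ args0, (∃ j, i < j ∧ j ≤ M ∧ .papp f args0 = pstepF Ts vf hatS k i (Ts j)) →
        .papp f args0 ≠ pstepF Ts vf hatS k i (Ts (i+1)) →
        ∃ j, i + 1 < j ∧ j ≤ M ∧ 
          fsubstF (pstepF Ts vf hatS k i (Ts (i+1))) (Uform vf hatS k (i+1)) (.papp f args0)
            = pstepF Ts vf hatS k (i+1) (Ts j) := by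
      rintro args0 ⟨j, h1, h2, h3⟩ hne
      refine ⟨j, ?_, h2, by rw [pstepF, h3]⟩
      rcases eq_or_lt_of_le (Nat.succ_le_of_lt h1) with h | h
      · exact absurd (by rw [h3, ← h]) hne
      · exact h
    obtain ⟨ih1, ih2⟩ := ih (by omega)
    refine ⟨?_, ?_⟩
    · intro E hE args h
      rw [pstepT] at h
      rcases (occ_fsubst f _ _).1 _ args h with h | ⟨args0, h1, h2, h3⟩
      · exact absurd h (hU _ (by omega) hi args)
      · rw [h1]; exact key _ (ih1 E hE args0 h3) h2
    · intro E hE args h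
      rw [pstepF] at h
      rcases (occ_fsubst f _ _).2 _ args h with h | ⟨args0, h1, h2, h3⟩
      · exact absurd h (hU _ (by omega) hi args)
      · rw [h1]; exact key _ (ih2 E hE args0 h3) h2

theorem pr_U_free (H : PrElimHyps G f k n Ts S vf hatS) :
    ∀ i, (1 ≤ i → i ≤ n → ∀ args, ¬ SubExpr (.f (.papp f args)) (.f (Uform vf hatS k i))) ∧
      (∀ l, 1 ≤ i → i ≤ n → 1 ≤ l → l ≤ k → ∀ args,
        ¬ SubExpr (.f (.papp f args)) (.t (hatS i l))) := by
  intro i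
  induction i using Nat.strong_induction_on with
  | _ i ih =>
    have hS : ∀ l, 1 ≤ i → i ≤ n → 1 ≤ l → l ≤ k → ∀ args,
        ¬ SubExpr (.f (.papp f args)) (.t (hatS i l)) := by
      intro l h1 h2 h3 h4 args h
      rw [H.hatS_spec i l h1 h2 h3 h4] at h
      have hlt := pr_ford_lt H h1 h2 h3 h4
      obtain ⟨j, h5, h6, -⟩ := (pr_occ (Ts := Ts) (vf := vf) (hatS := hatS) (k := k) f
        (pfordT n Ts (S i l)) (pfordT n Ts (S i l))
        (fun i' h5 h6 => (ih i' (by omega)).1 h5 (by omega)) _ le_rfl).1 (S i l) (by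
          intro args ha
          have hG : FormulaInF (.papp f args) G :=
            sx_trans (ha.tail (pr_S_imm H h1 h2 h3 h4)) (H.ps_occurs i h1 h2)
          obtain ⟨j, h5, h6, h7⟩ := H.ps_complete args hG
          exact ⟨j, h5, (pford_spec n Ts (S i l)).1 j h5 h6 (by rw [← h7]; exact ha), h7⟩) args h
      omega
    refine ⟨?_, hS⟩
    intro h1 h2 args h
    rcases occ_Vform (i - 1) 1 (by omega) le_rfl h with ⟨j, h3, h4, h5⟩ | ⟨j, l, h3, h4, h5, h6, h7⟩
    · exact H.vp_ne_p j h3 (by omega) h5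
    · rcases eq_or_lt_of_le h4 with h8 | h8
      · subst h8; exact hS l h1 h2 h5 h6 args h7
      · exact (ih j h8).2 l h3 (by omega) h5 h6 args h7

theorem pr_res_free (H : PrElimHyps G f k n Ts S vf hatS) (args) :
    ¬ SubExpr (.f (.papp f args)) (.f (pstepF Ts vf hatS k n G)) := by
  intro h
  obtain ⟨j, h1, h2, -⟩ := (pr_occ (Ts := Ts) (vf := vf) (hatS := hatS) (k := k) f n n
    (fun i h5 h6 => (pr_U_free H i).1 h5 h6) n le_rfl).2 G (fun args ha => H.ps_complete args ha)
    args h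
  omega

theorem pr_eval_Ts (H : PrElimHyps G f k n Ts S vf hatS) {D : Type} (J : Interp Fn Pr D) {i : ℕ}
    (h1 : 1 ≤ i) (h2 : i ≤ n) : evalF J (Ts i) = J.pr f (keyOf J S k i) := by
  rw [H.ps_app i h1 h2, evalF_papp, List.map_map]; rfl

open Classical in
theorem pr_valid (H : PrElimHyps G f k n Ts S vf hatS) (D : Type) :
    ValidOn (pstepF Ts vf hatS k n G) D ↔ ValidOn G D := by
  constructor
  · intro hv I
    let J : Interp Fn Pr D :=
      ⟨I.fn, fun g xs =>
        if h : ∃ i, 1 ≤ i ∧ i ≤ n ∧ vf i = g then evalF I (Ts h.choose) else I.pr g xs⟩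
    have hJv : ∀ i, 1 ≤ i → i ≤ n → J.pr (vf i) [] = evalF I (Ts i) := by
      intro i h1 h2
      have h : ∃ i', 1 ≤ i' ∧ i' ≤ n ∧ vf i' = vf i := ⟨i, h1, h2, rfl⟩
      have : J.pr (vf i) [] = evalF I (Ts h.choose) := dif_pos h
      rw [this, H.vp_inj _ i h.choose_spec.1 h.choose_spec.2.1 h1 h2 h.choose_spec.2.2]
    have hag : OccAgree I J (.f G) := by
      refine ⟨fun _ _ _ => rfl, ?_⟩
      intro g args hg
      funext xs
      have h : ¬ ∃ i, 1 ≤ i ∧ i ≤ n ∧ vf i = g := by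
        rintro ⟨i, h1, h2, rfl⟩
        exact H.vp_fresh i h1 h2 ⟨args, hg⟩
      have e : J.pr g xs = I.pr g xs := dif_neg h
      exact e.symm
    have hagT : ∀ E, SubExpr (.f E) (.f G) → evalF I E = evalF J E := by
      intro E hE
      apply (eval_agree I J).2
      exact ⟨fun g a h => hag.1 g a (sx_trans h hE), fun g a h => hag.2 g a (sx_trans h hE)⟩
    have hc := (pr_core H J (by
      intro i h1 h2 hS
      obtain ⟨j, h3, h4, h5, -, h6⟩ := eval_Vform J vf hatS k i (i-1) 1 (by omega)
      have hkey : ∀ j, 1 ≤ j → j ≤ i → keyOf J hatS k j = keyOf J S k j :=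
        fun j h1 h2 => keyOf_congr fun l h3 h4 => hS j l h1 h2 h3 h4
      rw [Uform, h6, hJv j h3 (by omega), hagT _ (H.ps_occurs j h3 (by omega)),
        pr_eval_Ts H J h3 (by omega), pr_eval_Ts H J h1 h2, ← hkey j h3 h4, ← hkey i h1 le_rfl, h5])
      n le_rfl).2 G
    rw [(eval_agree I J).2 G hag, ← hc]
    exact hv J
  · intro hv J
    let I : Interp Fn Pr D :=
      ⟨J.fn, fun g xs => if g = f then
          (if h : ∃ j, 1 ≤ j ∧ j ≤ n ∧ keyOf J hatS k j = xs then J.pr (vf (Nat.find h)) []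
            else J.pr f xs)
        else J.pr g xs⟩
    have hne : ∀ g, g ≠ f → I.pr g = J.pr g := by
      intro g hg; funext xs; exact if_neg hg
    have hf : ∀ xs j, 1 ≤ j → j ≤ n → keyOf J hatS k j = xs →
        (∀ j', 1 ≤ j' → j' < j → keyOf J hatS k j' ≠ xs) → I.pr f xs = J.pr (vf j) [] := by
      intro xs j h1 h2 h3 h4
      have h : ∃ j, 1 ≤ j ∧ j ≤ n ∧ keyOf J hatS k j = xs := ⟨j, h1, h2, h3⟩
      have e : I.pr f xs = J.pr (vf (Nat.find h)) [] := (if_pos rfl).trans (dif_pos h)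
      have : Nat.find h = j := by
        apply le_antisymm (Nat.find_min' h ⟨h1, h2, h3⟩)
        by_contra hc
        exact h4 _ (Nat.find_spec h).1 (by omega) (Nat.find_spec h).2.2
      rw [e, this]
    have hfree : ∀ e : EufExpr Fn Pr, (∀ args, ¬ SubExpr (.f (.papp f args)) e) → OccAgree I J e := by
      intro e he
      refine ⟨fun _ _ _ => rfl, ?_⟩
      intro g args hg
      apply hne
      rintro rfl
      exact he _ hg
    have hhat : ∀ j, 1 ≤ j → j ≤ n → keyOf I hatS k j = keyOf J hatS k j := by
      intro j h1 h2
      apply keyOf_congr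
      intro l h3 h4
      exact (eval_agree I J).1 _ (hfree _ ((pr_U_free H j).2 l h1 h2 h3 h4))
    have hc := (pr_core H I (by
      intro i h1 h2 hS
      obtain ⟨j, h3, h4, h5, h6, h7⟩ := eval_Vform I vf hatS k i (i-1) 1 (by omega)
      have hkey : ∀ j, 1 ≤ j → j ≤ i → keyOf I hatS k j = keyOf I S k j :=
        fun j h1 h2 => keyOf_congr fun l h3 h4 => hS j l h1 h2 h3 h4
      rw [Uform, h7, pr_eval_Ts H I h1 h2, ← hkey i h1 le_rfl, hne _ (H.vp_ne_p j h3 (by omega))]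
      symm
      apply hf _ j h3 (by omega)
      · rw [← hhat j h3 (by omega), h5]
      · intro j' h8 h9
        rw [← hhat j' h8 (by omega)]
        exact h6 j' h8 h9)
      n le_rfl).2 G
    rw [← (eval_agree I J).2 _ (hfree _ (pr_res_free H))]
    exact hc.trans (hv I)
end prElim

theorem step_valid {isP : Fn → Prop} {a b : EufFormula Fn Pr × Set Fn} (h : ElimStep isP a b)
    (D : Type) : ValidOn b.1 D ↔ ValidOn a.1 D := by
  cases h with
  | fnP H _ => exact fn_valid H D
  | fnG H _ => exact fn_valid H D
  | pr H => exact pr_valid H D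

theorem steps_valid {isP : Fn → Prop} {a b : EufFormula Fn Pr × Set Fn}
    (h : Relation.ReflTransGen (ElimStep isP) a b) (D : Type) :
    ValidOn b.1 D ↔ ValidOn a.1 D := by
  induction h with
  | refl => exact Iff.rfl
  | tail _ h ih => exact (step_valid h D).trans ih

end Helpers

/-- The formula `F*`, obtained from `F` by eliminating all applications of
function and predicate symbols of nonzero order via the nested-ITE construction, is
universally valid iff `F` is universally valid. -/
theorem euf_transform_theorem {Fn Pr : Type} (isP : Fn → Prop)
    (F Fstar : EufFormula Fn Pr) (V : Set Fn) (h : ElimTo isP F Fstar V) :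
    UniversallyValid Fstar ↔ UniversallyValid F := by
  exact forall_congr' fun D => forall_congr' fun _ => steps_valid h.1 D
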